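/- Let 0 < H₁ < H₂ < 1, a ∈ ℝ, b ≠ 0, and fix s > 0. Define for t ≥ s: R₁(t,s) = a²·(t^{2H₁} + s^{2H₁} − (t−s)^{2H₁})/2 + b²·(t^{2H₂} + s^{2H₂} − (t−s)^{2H₂})/2 and V₁(t) = a²·t^{2H₁} + b²·t^{2H₂}. Then there exist a constant c > 0 and an exponent d ∈ (0,1) such that lim_{t→∞} t^d · R₁(t,s)/√(V₁(t)·V₁(s)) = c. In other words, the fractional mixed fractional Brownian motion N^{H₁H₂}(a,b) has the long-range dependence property for every H₁ < H₂. -/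

import Mathlib

open Filter Real

/-!
Write `R_H(t, s)` for the covariance of fractional Brownian motion with Hurst exponent `H`. The
term `s ^ (2H)` is constant in `t`, while `t ^ (2H) - (t - s) ^ (2H) ∼ 2H s t ^ (2H - 1)`, so
`R_H(t, s)` grows exactly like `t ^ e` with `e = max 0 (2H - 1)`. This order is monotone in `H`, and
no cancellation can occur because both leading coefficients are nonnegative. Hence in a mixture the
largest Hurst exponent `H` governs both the covariance, of order `t ^ e`, and the standard
deviation, of order `t ^ H`, and the correlation decays like `t ^ (-d)` with
`d = H - e = min H (1 - H)`.
-/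

open scoped Topology

section Asymptotics

theorem tendsto_rpow_atTop_of_nonpos {q : ℝ} (hq : q ≤ 0) :
    Tendsto (fun t : ℝ => t ^ q) atTop (𝓝 (if q = 0 then 1 else 0)) := by
  rcases hq.eq_or_lt with rfl | hq
  · simp
  · simpa [hq.ne] using tendsto_rpow_neg_atTop (neg_pos.2 hq)

theorem hasDerivAt_one_sub_mul_rpow_zero (p s : ℝ) :
    HasDerivAt (fun x : ℝ => (1 - x * s) ^ p) (-(p * s)) 0 := by
  have h_base : HasDerivAt (fun x : ℝ => 1 - x * s) (-s) 0 := by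
    simpa using ((hasDerivAt_id (0 : ℝ)).mul_const s).const_sub 1
  simpa [mul_comm] using h_base.rpow_const (p := p) (Or.inl (by simp))

/-- With `x = t⁻¹`, the expression is the negative of the slope of `x ↦ (1 - x * s) ^ p` at `0`. -/
theorem tendsto_rpow_mul_rpow_sub_sub_rpow (p s : ℝ) :
    Tendsto (fun t : ℝ => t ^ (1 - p) * (t ^ p - (t - s) ^ p)) atTop (𝓝 (p * s)) := by
  have h_slope := ((hasDerivAt_one_sub_mul_rpow_zero p s).tendsto_slope_zero_right.comp
    tendsto_inv_atTop_nhdsGT_zero).neg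
  rw [neg_neg] at h_slope
  refine h_slope.congr' ?_
  filter_upwards [eventually_gt_atTop 0, eventually_gt_atTop s] with t ht hst
  have h_factor : (t - s) ^ p = t ^ p * (1 - t⁻¹ * s) ^ p := by
    have h_nonneg : 0 ≤ 1 - t⁻¹ * s := by
      rw [sub_nonneg, inv_mul_le_iff₀ ht, mul_one]
      exact hst.le
    rw [← mul_rpow ht.le h_nonneg, mul_sub, mul_one, mul_inv_cancel_left₀ ht.ne']
  have h_pow : t ^ (1 - p) * t ^ p = t := by
    rw [← rpow_add ht, sub_add_cancel, rpow_one]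
  simp only [Function.comp, zero_add, zero_mul, sub_zero, one_rpow, inv_inv, smul_eq_mul]
  rw [h_factor]
  linear_combination (-(1 - (1 - t⁻¹ * s) ^ p)) * h_pow

theorem tendsto_rpow_mul_div_sqrt {R V : ℝ → ℝ} {e h r v w : ℝ} (hvw : 0 < v * w)
    (hR : Tendsto (fun t => t ^ (-e) * R t) atTop (𝓝 r))
    (hV : Tendsto (fun t => t ^ (-(2 * h)) * V t) atTop (𝓝 v)) :
    Tendsto (fun t => t ^ (h - e) * (R t / √(V t * w))) atTop (𝓝 (r / √(v * w))) := by
  refine (hR.div (hV.mul_const w).sqrt (sqrt_pos.2 hvw).ne').congr' ?_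
  filter_upwards [eventually_gt_atTop 0] with t ht
  have h_sqrt : √(t ^ (-(2 * h)) * V t * w) = (t ^ h)⁻¹ * √(V t * w) := by
    rw [mul_assoc, sqrt_mul (by positivity), rpow_neg ht.le, mul_comm 2 h, rpow_mul ht.le,
      rpow_two, sqrt_inv, sqrt_sq (by positivity)]
  rw [Pi.div_apply, h_sqrt, sub_eq_add_neg h, rpow_add ht]
  simp only [div_eq_mul_inv, mul_inv, inv_inv]
  ring

end Asymptotics

section FiniteSums

variable {ι : Type*} [Fintype ι]

theorem sum_sq_mul_pos {a f : ι → ℝ} {j : ι} (hf : ∀ i, 0 ≤ f i) (ha : a j ≠ 0) (hj : 0 < f j) :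
    0 < ∑ i, a i ^ 2 * f i :=
  Finset.sum_pos' (fun i _ => mul_nonneg (sq_nonneg _) (hf i))
    ⟨j, Finset.mem_univ j, by positivity⟩

theorem tendsto_mul_sum_const_mul {α : Type*} {l : Filter α} {g : α → ℝ} {f : ι → α → ℝ}
    {L : ι → ℝ} (w : ι → ℝ) (hf : ∀ i, Tendsto (fun t => g t * f i t) l (𝓝 (L i))) :
    Tendsto (fun t => g t * ∑ i, w i * f i t) l (𝓝 (∑ i, w i * L i)) := by
  simp only [Finset.mul_sum, mul_left_comm (g _)]
  exact tendsto_finsetSum _ fun i _ => (hf i).const_mul (w i)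

end FiniteSums

/-- The covariance of a fractional Brownian motion with Hurst exponent `H` at times `0 ≤ s ≤ t`.
The usual `|t - s|` is written `t - s`, so the value is not meaningful for `t < s`. -/
noncomputable def fBmCov (H t s : ℝ) : ℝ :=
  (t ^ (2 * H) + s ^ (2 * H) - (t - s) ^ (2 * H)) / 2

/-- The coefficient of `t ^ e` in the expansion of `fBmCov H t s` as `t → ∞`, for `e` at least
the growth order `max 0 (2 * H - 1)`. -/
noncomputable def fBmCovCoeff (H e s : ℝ) : ℝ :=
  ((if e = 0 then s ^ (2 * H) else 0) + (if e = 2 * H - 1 then 2 * H * s else 0)) / 2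

section FractionalBrownianMotion

variable {H e s : ℝ}

theorem fBmCovCoeff_nonneg (hs : 0 ≤ s) (he : 0 ≤ e) : 0 ≤ fBmCovCoeff H e s := by
  refine div_nonneg (add_nonneg ?_ ?_) zero_le_two
  · split_ifs <;> positivity
  · split_ifs with h
    · exact mul_nonneg (by linarith) hs
    · exact le_rfl

theorem fBmCovCoeff_max_pos (hs : 0 < s) : 0 < fBmCovCoeff H (max 0 (2 * H - 1)) s := by
  have h_const : 0 < s ^ (2 * H) := rpow_pos_of_pos hs _
  unfold fBmCovCoeff
  rcases lt_or_ge (2 * H - 1) 0 with h | h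
  · simpa [max_eq_left h.le, h.ne'] using h_const
  · have h_linear : 0 < 2 * H * s := mul_pos (by linarith) hs
    rw [max_eq_right h, if_pos rfl]
    split_ifs <;> positivity

theorem tendsto_rpow_neg_mul_fBmCov (he : max 0 (2 * H - 1) ≤ e) :
    Tendsto (fun t => t ^ (-e) * fBmCov H t s) atTop (𝓝 (fBmCovCoeff H e s)) := by
  obtain ⟨he₀, he₁⟩ := max_le_iff.1 he
  have h_const : Tendsto (fun t : ℝ => t ^ (-e) * s ^ (2 * H)) atTop
      (𝓝 (if e = 0 then s ^ (2 * H) else 0)) := by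
    simpa using (tendsto_rpow_atTop_of_nonpos (neg_nonpos.2 he₀)).mul_const (s ^ (2 * H))
  have h_increment : Tendsto (fun t : ℝ => t ^ (-e) * (t ^ (2 * H) - (t - s) ^ (2 * H))) atTop
      (𝓝 (if e = 2 * H - 1 then 2 * H * s else 0)) := by
    have h_prod := (tendsto_rpow_atTop_of_nonpos (sub_nonpos.2 he₁)).mul
      (tendsto_rpow_mul_rpow_sub_sub_rpow (2 * H) s)
    simp only [sub_eq_zero, ite_mul, one_mul, zero_mul, eq_comm (b := e)] at h_prod
    refine h_prod.congr' ?_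
    filter_upwards [eventually_gt_atTop 0] with t ht
    rw [← mul_assoc, ← rpow_add ht]
    congr 2
    ring
  refine ((h_const.add h_increment).div_const 2).congr fun t => ?_
  rw [fBmCov]
  ring

end FractionalBrownianMotion

section Mixture

variable {ι : Type*} [Fintype ι]

/-- The covariance at times `0 ≤ s ≤ t` of the mixture `∑ i, a i * B i` of independent fractional
Brownian motions `B i` with Hurst exponents `H i`. -/
noncomputable def mixedFBmCov (H a : ι → ℝ) (t s : ℝ) : ℝ :=
  ∑ i, a i ^ 2 * fBmCov (H i) t s

/-- The variance at time `t ≥ 0` of the mixture `∑ i, a i * B i` of independent fractional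
Brownian motions `B i` with Hurst exponents `H i`. -/
noncomputable def mixedFBmVar (H a : ι → ℝ) (t : ℝ) : ℝ :=
  ∑ i, a i ^ 2 * t ^ (2 * H i)

variable {H a : ι → ℝ} {j : ι}

theorem mixedFBmVar_pos (ha : a j ≠ 0) {t : ℝ} (ht : 0 < t) : 0 < mixedFBmVar H a t :=
  sum_sq_mul_pos (fun _ => by positivity) ha (rpow_pos_of_pos ht _)

theorem exists_tendsto_rpow_neg_mul_mixedFBmCov (hmax : ∀ i, H i ≤ H j) (ha : a j ≠ 0) {s : ℝ}
    (hs : 0 < s) :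
    ∃ r > 0, Tendsto (fun t => t ^ (-max 0 (2 * H j - 1)) * mixedFBmCov H a t s) atTop (𝓝 r) := by
  refine ⟨∑ i, a i ^ 2 * fBmCovCoeff (H i) (max 0 (2 * H j - 1)) s,
    sum_sq_mul_pos (fun i => fBmCovCoeff_nonneg hs.le (le_max_left _ _)) ha
      (fBmCovCoeff_max_pos hs),
    tendsto_mul_sum_const_mul _ fun i => tendsto_rpow_neg_mul_fBmCov ?_⟩
  gcongr
  exact hmax i

theorem exists_tendsto_rpow_neg_mul_mixedFBmVar (hmax : ∀ i, H i ≤ H j) (ha : a j ≠ 0) :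
    ∃ v > 0, Tendsto (fun t => t ^ (-(2 * H j)) * mixedFBmVar H a t) atTop (𝓝 v) := by
  refine ⟨∑ i, a i ^ 2 * if 2 * H i - 2 * H j = 0 then 1 else 0,
    sum_sq_mul_pos (fun i => by split_ifs <;> simp) ha (by simp),
    tendsto_mul_sum_const_mul _ fun i => ?_⟩
  refine (tendsto_rpow_atTop_of_nonpos (by linarith [hmax i])).congr' ?_
  filter_upwards [eventually_gt_atTop 0] with t ht
  rw [← rpow_add ht, neg_add_eq_sub]

theorem exists_tendsto_rpow_mul_mixedFBmCov_div_sqrt (hmax : ∀ i, H i ≤ H j) (ha : a j ≠ 0)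
    {s : ℝ} (hs : 0 < s) :
    ∃ c > 0, Tendsto (fun t => t ^ min (H j) (1 - H j) *
      (mixedFBmCov H a t s / √(mixedFBmVar H a t * mixedFBmVar H a s))) atTop (𝓝 c) := by
  obtain ⟨r, hr, hcov⟩ := exists_tendsto_rpow_neg_mul_mixedFBmCov hmax ha hs
  obtain ⟨v, hv, hvar⟩ := exists_tendsto_rpow_neg_mul_mixedFBmVar hmax ha
  have hvw : 0 < v * mixedFBmVar H a s := mul_pos hv (mixedFBmVar_pos ha hs)
  have h_exponent : min (H j) (1 - H j) = H j - max 0 (2 * H j - 1) := by grind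
  rw [h_exponent]
  exact ⟨_, div_pos hr (sqrt_pos.2 hvw), tendsto_rpow_mul_div_sqrt hvw hcov hvar⟩

theorem fmfBm_long_range_dependence_general (hmax : ∀ i, H i ≤ H j) (hj₀ : 0 < H j)
    (hj₁ : H j < 1) (ha : a j ≠ 0) {s : ℝ} (hs : 0 < s) :
    ∃ c > 0, ∃ d ∈ Set.Ioo (0 : ℝ) 1,
      Tendsto (fun t => t ^ d * (mixedFBmCov H a t s / √(mixedFBmVar H a t * mixedFBmVar H a s)))
        atTop (𝓝 c) := by
  obtain ⟨c, hc, hlim⟩ := exists_tendsto_rpow_mul_mixedFBmCov_div_sqrt hmax ha hs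
  exact ⟨c, hc, _, ⟨lt_min hj₀ (sub_pos.2 hj₁), min_lt_of_left_lt hj₁⟩, hlim⟩

end Mixture

/-- The fractional mixed fractional Brownian motion `N^{H₁H₂}(a,b)` has the long-range
dependence property for every `H₁ < H₂` (with `b ≠ 0`): with covariance
`R₁(t,s) = a²(t^{2H₁}+s^{2H₁}-(t-s)^{2H₁})/2 + b²(t^{2H₂}+s^{2H₂}-(t-s)^{2H₂})/2`
and variance `V₁(t) = a²t^{2H₁} + b²t^{2H₂}`, there are `c > 0` and `d ∈ (0,1)` with
`t^d · R₁(t,s)/√(V₁(t)V₁(s)) → c` as `t → ∞`. -/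
theorem fmfBm_long_range_dependence
    (H₁ H₂ a b s : ℝ)
    (hH₁ : 0 < H₁) (hH₁₂ : H₁ < H₂) (hH₂ : H₂ < 1)
    (hb : b ≠ 0) (hs : 0 < s)
    (R₁ : ℝ → ℝ → ℝ)
    (hR₁ : ∀ u v : ℝ, R₁ u v =
      a ^ 2 * (u ^ (2 * H₁) + v ^ (2 * H₁) - (u - v) ^ (2 * H₁)) / 2 +
      b ^ 2 * (u ^ (2 * H₂) + v ^ (2 * H₂) - (u - v) ^ (2 * H₂)) / 2)
    (V₁ : ℝ → ℝ)
    (hV₁ : ∀ u : ℝ, V₁ u = a ^ 2 * u ^ (2 * H₁) + b ^ 2 * u ^ (2 * H₂)) :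
    ∃ c > 0, ∃ d ∈ Set.Ioo (0 : ℝ) 1,
      Tendsto (fun t : ℝ => t ^ d * (R₁ t s / Real.sqrt (V₁ t * V₁ s)))
        atTop (nhds c) := by
  have hR : ∀ t, R₁ t s = mixedFBmCov ![H₁, H₂] ![a, b] t s := fun t => by
    simp [hR₁, mixedFBmCov, fBmCov, mul_div_assoc]
  have hV : ∀ t, V₁ t = mixedFBmVar ![H₁, H₂] ![a, b] t := fun t => by simp [hV₁, mixedFBmVar]
  simp only [hR, hV]
  exact fmfBm_long_range_dependence_general (j := 1) (Fin.forall_fin_two.2 ⟨hH₁₂.le, le_rfl⟩)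
    (hH₁.trans hH₁₂) hH₂ hb hs
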